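/- Let Q ∈ ℂ^{n×m} have rank m, let W ∈ ℂ^{m×L} and J ∈ ℂ^{m×m}, and set S_0 := Q W and S_1 := Q J W. Suppose S_0 = U_0 Σ_0 W_0^H where U_0 ∈ ℂ^{n×m} satisfies U_0^H U_0 = I_m, Σ_0 ∈ ℂ^{m×m} is an invertible diagonal matrix, and W_0 ∈ ℂ^{L×m} satisfies W_0^H W_0 = I_m. Then the matrix Z := U_0^H Q ∈ ℂ^{m×m} is invertible and U_0^H S_1 W_0 Σ_0^{-1} = Z J Z^{-1}; in particular U_0^H S_1 W_0 Σ_0^{-1} is similar to J. -/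

import Mathlib

noncomputable section
open Matrix

/-!
Compressing `S₀ = Q W = U₀ Σ₀ W₀ᴴ` by `U₀ᴴ` and `W₀` gives `Z (W W₀) = Σ₀` for
`Z = U₀ᴴ Q`. Hence `Z` is invertible with `Z⁻¹ = W W₀ Σ₀⁻¹`,
which is the right-hand factor of `U₀ᴴ S₁ W₀ Σ₀⁻¹ = Z J (W W₀ Σ₀⁻¹)`.
-/

theorem matrix_mul_mul_eq_of_eq_mul_mul {R m n k l : Type*} [Semiring R]
    [Fintype m] [DecidableEq m] [Fintype n] [Fintype k] [DecidableEq k] [Fintype l]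
    {A : Matrix n l R} {P : Matrix m n R} {U : Matrix n m R} {S : Matrix m k R}
    {V : Matrix k l R} {X : Matrix l k R}
    (hPU : P * U = 1) (hVX : V * X = 1) (hA : A = U * S * V) : P * A * X = S :=
  calc P * A * X = (P * U) * S * (V * X) := by simp only [hA, Matrix.mul_assoc]
    _ = S := by rw [hPU, hVX, Matrix.one_mul, Matrix.mul_one]

theorem matrix_inv_eq_mul_inv_of_mul_eq {R m : Type*} [CommRing R] [Fintype m] [DecidableEq m]
    {Z Y S : Matrix m m R} (hS : IsUnit S) (hZY : Z * Y = S) : Z⁻¹ = Y * S⁻¹ := by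
  refine Matrix.inv_eq_right_inv ?_
  rw [← Matrix.mul_assoc, hZY, Matrix.mul_nonsing_inv S ((Matrix.isUnit_iff_isUnit_det S).mp hS)]

theorem stmt_6_general {R m n l : Type*} [CommRing R]
    [Fintype m] [DecidableEq m] [Fintype n] [Fintype l]
    {Q : Matrix n m R} {W : Matrix m l R} (J : Matrix m m R)
    {P : Matrix m n R} {U : Matrix n m R} {S : Matrix m m R} {V : Matrix m l R} {X : Matrix l m R}
    (hPU : P * U = 1) (hS : IsUnit S) (hVX : V * X = 1) (hQW : Q * W = U * S * V) :
    IsUnit (P * Q) ∧ P * (Q * J * W) * X * S⁻¹ = (P * Q) * J * (P * Q)⁻¹ := by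
  have hZ : (P * Q) * (W * X) = S := by
    simpa only [Matrix.mul_assoc] using matrix_mul_mul_eq_of_eq_mul_mul hPU hVX hQW
  refine ⟨isUnit_of_mul_isUnit_left (hZ ▸ hS), ?_⟩
  rw [matrix_inv_eq_mul_inv_of_mul_eq hS hZ]
  simp only [Matrix.mul_assoc]

/-- let `Q ∈ ℂ^{n×m}` have rank `m`, `S₀ := Q W`, `S₁ := Q J W`,
and suppose `S₀ = U₀ Σ₀ W₀ᴴ` with `U₀ᴴU₀ = I`, `Σ₀` invertible diagonal and
`W₀ᴴW₀ = I`. Then `Z := U₀ᴴ Q` is invertible and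
`U₀ᴴ S₁ W₀ Σ₀⁻¹ = Z J Z⁻¹`; in particular `U₀ᴴ S₁ W₀ Σ₀⁻¹` is similar to `J`. -/
theorem stmt_6 (n m L : ℕ) (Q : Matrix (Fin n) (Fin m) ℂ) (hQ : Q.rank = m)
    (W : Matrix (Fin m) (Fin L) ℂ) (J : Matrix (Fin m) (Fin m) ℂ)
    (U0 : Matrix (Fin n) (Fin m) ℂ) (hU0 : U0ᴴ * U0 = 1)
    (sigma : Fin m → ℂ) (hsigma : ∀ i, sigma i ≠ 0)
    (W0 : Matrix (Fin L) (Fin m) ℂ) (hW0 : W0ᴴ * W0 = 1)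
    (hSVD : Q * W = U0 * Matrix.diagonal sigma * W0ᴴ) :
    IsUnit (U0ᴴ * Q) ∧
    U0ᴴ * (Q * J * W) * W0 * (Matrix.diagonal sigma)⁻¹ =
      (U0ᴴ * Q) * J * (U0ᴴ * Q)⁻¹ :=
  stmt_6_general J hU0
    (Matrix.isUnit_diagonal.mpr <| Pi.isUnit_iff.mpr fun i => (hsigma i).isUnit) hW0 hSVD
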